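/- Genz's separation-of-variables identity in dimension two: let W₁, W₂ be independent standard normal random variables, c ∈ ℝ, and set Z₁ := W₁ and Z₂ := c·W₁ + W₂. For real numbers a₁ < b₁ and a₂ < b₂, put d₁ := Φ(a₁) and e₁ := Φ(b₁). Then P(a₁ < Z₁ ≤ b₁ and a₂ < Z₂ ≤ b₂) = (e₁ − d₁) · ∫₀¹ [ Φ( b₂ − c·Φ⁻¹( d₁ + w·(e₁ − d₁) ) ) − Φ( a₂ − c·Φ⁻¹( d₁ + w·(e₁ − d₁) ) ) ] dw. -/

import Mathlib

/-!
By independence the pair `(W₁, W₂)` has law `γ ⊗ γ` with `γ = N(0, 1)`. Integrating out the second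
coordinate with Fubini, the section of the box over `x` is empty unless `a₁ < x ≤ b₁`, and is then
the half-open interval `(a₂ - c x, b₂ - c x]`, of mass `G x = Φ(b₂ - c x) - Φ(a₂ - c x)`
(`gaussian_prod_box`). So the probability is `∫_{a₁}^{b₁} φ(x) G x dx`, with `φ` the density of `γ`.
Since `Φ` is strictly increasing with derivative `φ`, the substitution `u = Φ x` turns this into
`∫_{Φ a₁}^{Φ b₁} G(Φ⁻¹ u) du` (`setIntegral_pdf_mul_eq`), and the affine substitution
`u = d₁ + w (e₁ - d₁)` gives the integral over `(0, 1)`. The change of variables used needs only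
injectivity of `Φ`, so no regularity of `Φ⁻¹` enters; and `Function.invFun stdPhi` is only
evaluated on the range of `Φ`, where it is a genuine inverse.
-/

open Matrix MeasureTheory

noncomputable section

/-- Index set for the strictly lower triangular entries: pairs (i, j) with j < i,
of cardinality J(J-1)/2. -/
def LowIdx (J : ℕ) := {p : Fin J × Fin J // p.2 < p.1}

/-- `Λ(λ)`: the J×J lower triangular matrix with unit diagonal whose strictly lower
triangular entries are the components of `lam`. -/
def unitri {J : ℕ} (lam : LowIdx J → ℝ) : Matrix (Fin J) (Fin J) ℝ :=
  Matrix.of fun i j => if h : j < i then lam ⟨(i, j), h⟩ else if i = j then 1 else 0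

/-- `Ω⁽²⁾(λ) = Λ(λ)·diag(Λ(λ)⁻¹Λ(λ)⁻ᵀ)^{1/2}`. -/
def Omega2 {J : ℕ} (lam : LowIdx J → ℝ) : Matrix (Fin J) (Fin J) ℝ :=
  unitri lam * Matrix.diagonal fun j => Real.sqrt (((unitri lam)⁻¹ * (unitri lam)⁻¹ᵀ) j j)

/-- `φ(z ∣ Ω)`: the density of `N(0, Ω⁻¹Ω⁻ᵀ)` expressed via the inverse Cholesky
factor `Ω` (lower triangular with positive diagonal). -/
def npnPdf {ι : Type*} [Fintype ι] (Ω : Matrix ι ι ℝ) (z : ι → ℝ) : ℝ :=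
  Real.exp (-((Fintype.card ι : ℝ) / 2) * Real.log (2 * Real.pi)
    + ∑ j, Real.log (Ω j j) - 1 / 2 * ∑ j, Ω.mulVec z j ^ 2)

/-- `Φ`: the standard normal cumulative distribution function. -/
def stdPhi (x : ℝ) : ℝ := ∫ t in Set.Iic x, Real.exp (-t ^ 2 / 2) / Real.sqrt (2 * Real.pi)

/-- `Φ` extended to `[-∞, +∞]` with `Φ(−∞) = 0` and `Φ(+∞) = 1`. -/
def stdPhiE (x : EReal) : ℝ :=
  if x = ⊥ then 0 else if x = ⊤ then 1 else stdPhi x.toReal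

/-- Extended cutoffs: `θ_{j,0} = −∞`, `θ_{j,K} = +∞`, and the coordinates of `θ`
in between. -/
def cutE {K : ℕ} (θ : Fin (K - 1) → ℝ) (k : Fin (K + 1)) : EReal :=
  if h0 : (k : ℕ) = 0 then ⊥
  else if hK : K ≤ (k : ℕ) then ⊤
  else ((θ ⟨(k : ℕ) - 1, by omega⟩ : ℝ) : EReal)

open ProbabilityTheory in
lemma stdPhi_eq_integral_pdf (x : ℝ) :
    stdPhi x = ∫ t in Set.Iic x, gaussianPDFReal 0 1 t := by
  unfold stdPhi
  congr 1
  funext t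
  simp [gaussianPDFReal, div_eq_mul_inv, mul_comm]

open ProbabilityTheory in
lemma stdPhi_eq_real (x : ℝ) : stdPhi x = (gaussianReal 0 1).real (Set.Iic x) := by
  rw [stdPhi_eq_integral_pdf, measureReal_def, gaussianReal_apply_eq_integral _ one_ne_zero,
    ENNReal.toReal_ofReal (integral_nonneg fun t => gaussianPDFReal_nonneg _ _ t)]

open ProbabilityTheory in
lemma stdPhi_sub_eq_real {x y : ℝ} (h : x ≤ y) :
    stdPhi y - stdPhi x = (gaussianReal 0 1).real (Set.Ioc x y) := by
  have hd : Set.Ioc x y = Set.Iic y \ Set.Iic x := by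
    ext t
    simp [and_comm]
  rw [stdPhi_eq_real, stdPhi_eq_real, hd,
    measureReal_sdiff (Set.Iic_subset_Iic.2 h) measurableSet_Iic]

open ProbabilityTheory in
lemma hasDerivAt_stdPhi (x : ℝ) : HasDerivAt stdPhi (gaussianPDFReal 0 1 x) x := by
  have hc : Continuous (gaussianPDFReal 0 1) := by
    unfold gaussianPDFReal
    fun_prop
  have hi := integrable_gaussianPDFReal 0 1
  have h : stdPhi = fun u => stdPhi 0 + ∫ t in (0 : ℝ)..u, gaussianPDFReal 0 1 t := by
    funext u
    rw [← intervalIntegral.integral_Iic_sub_Iic hi.integrableOn hi.integrableOn,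
      stdPhi_eq_integral_pdf, stdPhi_eq_integral_pdf]
    ring
  rw [h]
  exact (intervalIntegral.integral_hasDerivAt_right (hc.intervalIntegrable _ _)
    hc.aestronglyMeasurable.stronglyMeasurableAtFilter hc.continuousAt).const_add _

lemma continuous_stdPhi : Continuous stdPhi :=
  continuous_iff_continuousAt.2 fun x => (hasDerivAt_stdPhi x).continuousAt

lemma strictMono_stdPhi : StrictMono stdPhi :=
  strictMono_of_hasDerivAt_pos hasDerivAt_stdPhi
    fun x => ProbabilityTheory.gaussianPDFReal_pos 0 1 x one_ne_zero

lemma stdPhi_image_Ioc {a b : ℝ} (h : a ≤ b) :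
    stdPhi '' Set.Ioc a b = Set.Ioc (stdPhi a) (stdPhi b) := by
  refine Set.Subset.antisymm ?_ (intermediate_value_Ioc h continuous_stdPhi.continuousOn)
  rintro _ ⟨x, hx, rfl⟩
  exact ⟨strictMono_stdPhi hx.1, strictMono_stdPhi.monotone hx.2⟩

open ProbabilityTheory in
/-- The substitution `u = Φ x`, valid for an arbitrary integrand `G`. -/
lemma setIntegral_pdf_mul_eq {a b : ℝ} (h : a ≤ b) (G : ℝ → ℝ) :
    ∫ x in Set.Ioc a b, gaussianPDFReal 0 1 x * G x
      = ∫ u in stdPhi a..stdPhi b, G (Function.invFun stdPhi u) := by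
  rw [intervalIntegral.integral_of_le (strictMono_stdPhi.monotone h), ← stdPhi_image_Ioc h,
    integral_image_eq_integral_abs_deriv_smul measurableSet_Ioc
      (fun x _ => (hasDerivAt_stdPhi x).hasDerivWithinAt) strictMono_stdPhi.injective.injOn]
  simp [Function.leftInverse_invFun strictMono_stdPhi.injective _,
    abs_of_nonneg (gaussianPDFReal_nonneg 0 1 _)]

lemma measurableSet_box (c a₁ b₁ a₂ b₂ : ℝ) :
    MeasurableSet {p : ℝ × ℝ | (a₁ < p.1 ∧ p.1 ≤ b₁)
      ∧ a₂ < c * p.1 + p.2 ∧ c * p.1 + p.2 ≤ b₂} := by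
  have h : Measurable fun p : ℝ × ℝ => c * p.1 + p.2 := by fun_prop
  exact (measurable_fst (measurableSet_Ioc (a := a₁) (b := b₁))).inter
    (h (measurableSet_Ioc (a := a₂) (b := b₂)))

open ProbabilityTheory in
/-- Fubini: the Gaussian mass of the sheared box, as an integral over the first coordinate. -/
lemma gaussian_prod_box (c a₁ b₁ a₂ b₂ : ℝ) (h : a₂ ≤ b₂) :
    (((gaussianReal 0 1).prod (gaussianReal 0 1)) {p : ℝ × ℝ | (a₁ < p.1 ∧ p.1 ≤ b₁)
        ∧ a₂ < c * p.1 + p.2 ∧ c * p.1 + p.2 ≤ b₂}).toReal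
      = ∫ x in Set.Ioc a₁ b₁,
          gaussianPDFReal 0 1 x * (stdPhi (b₂ - c * x) - stdPhi (a₂ - c * x)) := by
  have hS := measurableSet_box c a₁ b₁ a₂ b₂
  rw [Measure.prod_apply hS, ← integral_toReal (measurable_measure_prodMk_left hS).aemeasurable
    (Filter.Eventually.of_forall fun x => measure_lt_top _ _),
    integral_gaussianReal_eq_integral_smul one_ne_zero, ← integral_indicator measurableSet_Ioc]
  congr 1
  funext x
  by_cases hx : x ∈ Set.Ioc a₁ b₁
  · rw [Set.indicator_of_mem hx, stdPhi_sub_eq_real (by linarith), smul_eq_mul, measureReal_def]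
    congr 3
    ext y
    simp only [Set.mem_preimage, Set.mem_ofPred_eq, Set.mem_Ioc]
    exact ⟨fun hy => ⟨by linarith [hy.2.1], by linarith [hy.2.2]⟩,
      fun hy => ⟨hx, by linarith [hy.1], by linarith [hy.2]⟩⟩
  · have he : Prod.mk x ⁻¹' {p : ℝ × ℝ | (a₁ < p.1 ∧ p.1 ≤ b₁)
        ∧ a₂ < c * p.1 + p.2 ∧ c * p.1 + p.2 ≤ b₂} = ∅ :=
      Set.eq_empty_of_forall_notMem fun y hy => hx hy.1
    rw [Set.indicator_of_notMem hx, he]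
    simp

/-- Genz's separation-of-variables identity in dimension two: for
independent standard normals `W₁, W₂`, `Z₁ = W₁`, `Z₂ = c·W₁ + W₂`, and
`d₁ = Φ(a₁)`, `e₁ = Φ(b₁)`,
`P(a₁ < Z₁ ≤ b₁, a₂ < Z₂ ≤ b₂) = (e₁ − d₁) · ∫₀¹ [Φ(b₂ − c·Φ⁻¹(d₁ + w(e₁ − d₁)))
− Φ(a₂ − c·Φ⁻¹(d₁ + w(e₁ − d₁)))] dw`. -/
theorem genz_separation_of_variables
    {α : Type*} [MeasurableSpace α] (μ : Measure α) [IsProbabilityMeasure μ]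
    (W₁ W₂ : α → ℝ) (hm₁ : Measurable W₁) (hm₂ : Measurable W₂)
    (h₁ : μ.map W₁ = ProbabilityTheory.gaussianReal 0 1)
    (h₂ : μ.map W₂ = ProbabilityTheory.gaussianReal 0 1)
    (hind : ProbabilityTheory.IndepFun W₁ W₂ μ)
    (c a₁ b₁ a₂ b₂ : ℝ) (hab₁ : a₁ < b₁) (hab₂ : a₂ < b₂) :
    (μ {ω | (a₁ < W₁ ω ∧ W₁ ω ≤ b₁)
        ∧ a₂ < c * W₁ ω + W₂ ω ∧ c * W₁ ω + W₂ ω ≤ b₂}).toReal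
      = (stdPhi b₁ - stdPhi a₁)
        * ∫ w in (0 : ℝ)..1,
            (stdPhi (b₂ - c * Function.invFun stdPhi
                (stdPhi a₁ + w * (stdPhi b₁ - stdPhi a₁)))
              - stdPhi (a₂ - c * Function.invFun stdPhi
                (stdPhi a₁ + w * (stdPhi b₁ - stdPhi a₁)))) := by
  have hlaw : μ.map (fun ω => (W₁ ω, W₂ ω)) = (ProbabilityTheory.gaussianReal 0 1).prod
      (ProbabilityTheory.gaussianReal 0 1) := by
    rw [hind.map_prod_eq_prod_map_map hm₁.aemeasurable hm₂.aemeasurable, h₁, h₂]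
  have hS := measurableSet_box c a₁ b₁ a₂ b₂
  have hbox := gaussian_prod_box c a₁ b₁ a₂ b₂ hab₂.le
  rw [← hlaw, Measure.map_apply (hm₁.prodMk hm₂) hS,
    setIntegral_pdf_mul_eq hab₁.le fun x => stdPhi (b₂ - c * x) - stdPhi (a₂ - c * x)] at hbox
  have haff := intervalIntegral.mul_integral_comp_add_mul (a := 0) (b := 1)
    (c := stdPhi b₁ - stdPhi a₁) (d := stdPhi a₁)
    (f := fun u => stdPhi (b₂ - c * Function.invFun stdPhi u)
      - stdPhi (a₂ - c * Function.invFun stdPhi u))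
  rw [mul_zero, add_zero, mul_one, add_sub_cancel] at haff
  simp only [mul_comm _ (stdPhi b₁ - stdPhi a₁)] at haff ⊢
  exact hbox.trans haff.symm
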